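/- Let n ∈ ℕ and let Θ be an invertible skew-symmetric real n × n matrix (Θᵀ = −Θ). Define the bicharacter σ(η,ζ) := exp(2πi⟨η, Θζ⟩) on ℝⁿ, and for Schwartz functions f, g : ℝⁿ → ℂ define the twisted convolution (f ∗_σ g)(ξ) := ∫_{ℝⁿ} σ(η, ξ−η)·f(η)·g(ξ−η) dη, and the Fourier transform 𝓕h(v) := ∫_{ℝⁿ} h(ξ)·exp(2πi⟨ξ,v⟩) dξ. Then f ∗_σ g is integrable, the double integral on the right below converges absolutely, and for every v ∈ ℝⁿ: 𝓕(f ∗_σ g)(v) = ∫_{ℝⁿ} ∫_{ℝⁿ} exp(2πi⟨u,w⟩)·𝓕f(v − Θu)·𝓕g(v + w) du dw. -/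

import Mathlib

open MeasureTheory Matrix

/-- Twisted convolution on `ℝⁿ` with respect to the bicharacter
`σ(η,ζ) = exp(2πi⟨η,Θζ⟩)`. -/
noncomputable def twistedConvR {n : ℕ} (Θ : Matrix (Fin n) (Fin n) ℝ)
    (f g : (Fin n → ℝ) → ℂ) (ξ : Fin n → ℝ) : ℂ :=
  ∫ η : Fin n → ℝ,
    Complex.exp (2 * Real.pi * Complex.I * ((η ⬝ᵥ Θ.mulVec (ξ - η) : ℝ) : ℂ))
      * f η * g (ξ - η)

/-- The Fourier transform `𝓕h(v) = ∫ h(ξ) exp(2πi⟨ξ,v⟩) dξ`. -/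
noncomputable def fourierTr {n : ℕ} (h : (Fin n → ℝ) → ℂ) (v : Fin n → ℝ) : ℂ :=
  ∫ ξ : Fin n → ℝ, h ξ * Complex.exp (2 * Real.pi * Complex.I * ((ξ ⬝ᵥ v : ℝ) : ℂ))

open FourierTransform in
/-- The plane wave transform of a Schwartz function is Schwartz, and applying it twice gives the
reflection. -/
lemma exists_schwartz_fourierTr {n : ℕ} (g : SchwartzMap (Fin n → ℝ) ℂ) :
    ∃ G : SchwartzMap (Fin n → ℝ) ℂ, (∀ v, fourierTr (fun ξ => g ξ) v = G v) ∧
      ∀ u, fourierTr (fun ξ => G ξ) u = g (-u) := by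
  have key : ∀ (h : EuclideanSpace ℝ (Fin n) → ℂ) (v : Fin n → ℝ),
      fourierTr (fun ξ => h (WithLp.toLp 2 ξ)) v = 𝓕⁻ h (WithLp.toLp 2 v) := by
    intro h v
    rw [Real.fourierInv_eq', fourierTr]
    rw [← (PiLp.volume_preserving_toLp (Fin n)).integral_comp
      (MeasurableEquiv.toLp 2 (Fin n → ℝ)).measurableEmbedding]
    congr 1
    ext ξ
    rw [smul_eq_mul, mul_comm]
    congr 2
    rw [EuclideanSpace.inner_toLp_toLp, star_trivial, dotProduct_comm v ξ]
    push_cast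
    ring
  let e := EuclideanSpace.equiv (Fin n) ℝ
  let g' : SchwartzMap (EuclideanSpace ℝ (Fin n)) ℂ :=
    SchwartzMap.compCLMOfContinuousLinearEquiv ℂ e g
  let G' : SchwartzMap (EuclideanSpace ℝ (Fin n)) ℂ := 𝓕⁻ g'
  refine ⟨SchwartzMap.compCLMOfContinuousLinearEquiv ℂ e.symm G', ?_, ?_⟩
  · intro v
    refine (key (fun x => g' x) v).trans ?_
    exact (congrFun (SchwartzMap.fourierInv_coe g') _).symm
  · intro u
    refine (key (fun x => G' x) u).trans ?_
    rw [Real.fourierInv_eq_fourier_neg]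
    have h1 : 𝓕 G' = g' := FourierTransform.fourier_fourierInv_eq g'
    have h2 := congrFun (SchwartzMap.fourier_coe G') (-WithLp.toLp 2 u)
    rw [h1] at h2
    exact h2.symm

lemma norm_wave (r : ℝ) : ‖Complex.exp (2 * Real.pi * Complex.I * (r : ℂ))‖ = 1 := by
  have : (2 * Real.pi * Complex.I * (r : ℂ)) = ((2 * Real.pi * r : ℝ) : ℂ) * Complex.I := by
    push_cast; ring
  rw [this, Complex.norm_exp_ofReal_mul_I]

lemma integrable_wave_mul {X : Type*} [TopologicalSpace X] [SecondCountableTopology X]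
    [MeasurableSpace X] [OpensMeasurableSpace X]
    {μ : Measure X} {F : X → ℂ} (hF : Integrable F μ) (φ : X → ℝ) (hφ : Continuous φ) :
    Integrable (fun x => Complex.exp (2 * Real.pi * Complex.I * (φ x : ℂ)) * F x) μ := by
  refine hF.bdd_mul (c := 1) ?_ (Filter.Eventually.of_forall fun x => (norm_wave _).le)
  exact Continuous.aestronglyMeasurable (by fun_prop)

lemma wave_add (r s : ℝ) : Complex.exp (2 * Real.pi * Complex.I * ((r + s : ℝ) : ℂ)) =
    Complex.exp (2 * Real.pi * Complex.I * (r : ℂ)) *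
      Complex.exp (2 * Real.pi * Complex.I * (s : ℂ)) := by
  rw [← Complex.exp_add]; push_cast; ring_nf

/-- The Fourier transform of the twisted convolution of Schwartz functions is the
Rieffel (Moyal-type) deformed product of their Fourier transforms. -/
theorem fourier_twistedConv_eq_rieffel {n : ℕ} (Θ : Matrix (Fin n) (Fin n) ℝ)
    (hskew : Θᵀ = -Θ) (hinv : IsUnit Θ.det)
    (f g : SchwartzMap (Fin n → ℝ) ℂ) :
    Integrable (twistedConvR Θ (fun ξ => f ξ) (fun ξ => g ξ)) volume ∧
    ∀ v : Fin n → ℝ,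
      Integrable (fun p : (Fin n → ℝ) × (Fin n → ℝ) =>
        Complex.exp (2 * Real.pi * Complex.I * ((p.1 ⬝ᵥ p.2 : ℝ) : ℂ))
          * fourierTr (fun ξ => f ξ) (v - Θ.mulVec p.1)
          * fourierTr (fun ξ => g ξ) (v + p.2)) volume ∧
      fourierTr (twistedConvR Θ (fun ξ => f ξ) (fun ξ => g ξ)) v
        = ∫ u : Fin n → ℝ, ∫ w : Fin n → ℝ,
            Complex.exp (2 * Real.pi * Complex.I * ((u ⬝ᵥ w : ℝ) : ℂ))
              * fourierTr (fun ξ => f ξ) (v - Θ.mulVec u)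
              * fourierTr (fun ξ => g ξ) (v + w) := by
  obtain ⟨Gf, hGf, -⟩ := exists_schwartz_fourierTr f
  obtain ⟨Gg, hGg, hGg'⟩ := exists_schwartz_fourierTr g
  -- the twisted convolution integrand
  have hK : Integrable (fun p : (Fin n → ℝ) × (Fin n → ℝ) =>
      Complex.exp (2 * Real.pi * Complex.I * ((p.2 ⬝ᵥ Θ.mulVec (p.1 - p.2) : ℝ) : ℂ))
        * f p.2 * g (p.1 - p.2)) (volume.prod volume) := by
    have h0 : Integrable (fun p : (Fin n → ℝ) × (Fin n → ℝ) => f p.2 * g (p.1 - p.2))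
        (volume.prod volume) := by
      simpa using (f.integrable (μ := volume)).convolution_integrand
        (ContinuousLinearMap.mul ℝ ℂ) (g.integrable (μ := volume))
    have := integrable_wave_mul h0 (fun p => p.2 ⬝ᵥ Θ.mulVec (p.1 - p.2)) (by fun_prop)
    simpa only [mul_assoc] using this
  refine ⟨hK.integral_prod_left, fun v => ?_⟩
  have hΘ : Integrable (fun u => Gf (v - Θ.mulVec u)) volume := by
    let L : (Fin n → ℝ) ≃L[ℝ] (Fin n → ℝ) :=
      (Matrix.toLinearEquiv' Θ (Θ.invertibleOfIsUnitDet hinv)).toContinuousLinearEquiv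
    have hL : ∀ u, L u = Θ.mulVec u := fun u => rfl
    have h1 := ((SchwartzMap.compCLMOfContinuousLinearEquiv ℂ L Gf).integrable
      (μ := volume)).comp_sub_left (L.symm v)
    refine h1.congr (Filter.Eventually.of_forall fun u => ?_)
    change Gf (L (L.symm v - u)) = Gf (v - Θ.mulVec u)
    rw [map_sub, L.apply_symm_apply, hL]
  refine ⟨?_, ?_⟩
  · simp only [hGf, hGg]
    have h2 : Integrable (fun w => Gg (v + w)) volume :=
      (Gg.integrable (μ := volume)).comp_add_left v
    have := integrable_wave_mul (hΘ.mul_prod h2) (fun p => p.1 ⬝ᵥ p.2) (by fun_prop)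
    rw [Measure.volume_eq_prod]
    simpa only [mul_assoc] using this
  -- common form
  have hM : Integrable (fun p : (Fin n → ℝ) × (Fin n → ℝ) =>
      Complex.exp (2 * Real.pi * Complex.I *
        ((p.1 ⬝ᵥ Θ.mulVec p.2 + (p.1 + p.2) ⬝ᵥ v : ℝ) : ℂ)) * (f p.1 * g p.2))
      (volume.prod volume) :=
    integrable_wave_mul ((f.integrable (μ := volume)).mul_prod (g.integrable (μ := volume)))
      (fun p => p.1 ⬝ᵥ Θ.mulVec p.2 + (p.1 + p.2) ⬝ᵥ v) (by fun_prop)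
  have lhs : fourierTr (twistedConvR Θ (fun ξ => f ξ) (fun ξ => g ξ)) v =
      ∫ η : Fin n → ℝ, ∫ ζ : Fin n → ℝ, Complex.exp (2 * Real.pi * Complex.I *
        ((η ⬝ᵥ Θ.mulVec ζ + (η + ζ) ⬝ᵥ v : ℝ) : ℂ)) * (f η * g ζ) := by
    simp only [fourierTr, twistedConvR, ← integral_mul_const]
    rw [integral_integral_swap]
    · congr 1
      ext η
      rw [← integral_add_right_eq_self _ η]
      congr 1
      ext ζ
      rw [add_sub_cancel_right, wave_add, add_comm ζ η]
      ring
    · have := integrable_wave_mul hK (fun p => p.1 ⬝ᵥ v) (by fun_prop)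
      refine this.congr (Filter.Eventually.of_forall fun p => ?_)
      exact mul_comm _ _
  rw [lhs, integral_integral_swap hM]
  rw [← integral_neg_eq_self]
  congr 1
  ext u
  -- inner integral in `w`
  have inner : ∫ w : Fin n → ℝ, Complex.exp (2 * Real.pi * Complex.I * ((u ⬝ᵥ w : ℝ) : ℂ))
      * fourierTr (fun ξ => f ξ) (v - Θ.mulVec u) * fourierTr (fun ξ => g ξ) (v + w) =
      fourierTr (fun ξ => f ξ) (v - Θ.mulVec u) *
        (Complex.exp (2 * Real.pi * Complex.I * ((-u ⬝ᵥ v : ℝ) : ℂ)) * g (-u)) := by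
    rw [← hGg' u, fourierTr.eq_1 (fun ξ => Gg ξ), ← integral_const_mul, ← integral_const_mul]
    conv_rhs => rw [← integral_add_left_eq_self _ v]
    congr 1
    ext w
    have : u ⬝ᵥ w = -u ⬝ᵥ v + (v + w) ⬝ᵥ u := by
      rw [add_dotProduct, neg_dotProduct, dotProduct_comm v u, dotProduct_comm w u]; ring
    rw [this, wave_add, hGg]
    ring
  rw [inner, fourierTr, ← integral_mul_const]
  congr 1
  ext η
  have : η ⬝ᵥ Θ.mulVec (-u) + (η + -u) ⬝ᵥ v = η ⬝ᵥ (v - Θ.mulVec u) + -u ⬝ᵥ v := by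
    rw [Matrix.mulVec_neg, dotProduct_neg, add_dotProduct, dotProduct_sub]; ring
  rw [this, wave_add]
  ring
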